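/- arXiv:1802.05249 — 2 statements merged into one kernel-verified Lean document; each statement's English description precedes it below -/
import Mathlib

section
/- Let n ≥ 1 be an integer, ρ ≥ 0, and let z ∈ ℝⁿ with mean z̄_n and sample variance s_n². If s_n² ≥ (2ρ/n)·(max_i z_i − z̄_n)², then inf_{p ∈ P_{ρ,n}} ∑_{i=1}^n p_i z_i = z̄_n − √(2ρ s_n² / n); that is, distributionally robust optimization over the χ² ball is exactly equivalent to variance regularization. -/
/-- The χ² uncertainty set `P_{ρ,n}`. -/
def chiSqBall (n : ℕ) (ρ : ℝ) : Set (Fin n → ℝ) :=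
  {p | (∀ i, 0 ≤ p i) ∧ (∑ i, p i = 1) ∧ (1/2) * ∑ i, ((n : ℝ) * p i - 1)^2 ≤ ρ}

/-- Mean of a vector. -/
noncomputable def vecMean {n : ℕ} (z : Fin n → ℝ) : ℝ := (∑ i, z i) / n

/-- Biased sample variance of a vector. -/
noncomputable def vecVar {n : ℕ} (z : Fin n → ℝ) : ℝ := (∑ i, (z i - vecMean z)^2) / n

/-- `OPT = inf_{p ∈ P_{ρ,n}} ∑ p_i z_i`. -/
noncomputable def droOPT (n : ℕ) (ρ : ℝ) (z : Fin n → ℝ) : ℝ :=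
  sInf ((fun p => ∑ i, p i * z i) '' chiSqBall n ρ)

/-!
In terms of the relative deviations `n * p i - 1`, the objective `∑ i, p i * z i` is `vecMean z`
plus `1 / n` times the inner product of these deviations with the centred vector `z i - vecMean z`.
The Cauchy–Schwarz inequality bounds this inner product on the χ² ball. Equality holds when
`n * p i - 1 = -c * (z i - vecMean z)`; the constraint `p i ≥ 0` reads `c * (z i - vecMean z) ≤ 1`,
which at the radius `ρ` is what the lower bound on the variance guarantees.
-/

section SqrtDiv

variable {a v : ℝ}

theorem sqrt_div_mul_self_eq_sqrt_mul (hv : 0 ≤ v) : √(a / v) * v = √(a * v) := by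
  calc √(a / v) * v = √(a / v) * √(v * v) := by rw [Real.sqrt_mul_self hv]
    _ = √(a / v * (v * v)) := (Real.sqrt_mul' _ (mul_self_nonneg v)).symm
    _ = √(a * v) := by rw [div_mul_eq_mul_div, mul_div_assoc, mul_self_div_self]

theorem sqrt_div_mul_le_one {d : ℝ} (hv : 0 ≤ v) (h : a * d ^ 2 ≤ v) : √(a / v) * d ≤ 1 := by
  calc √(a / v) * d ≤ √(a / v) * |d| := by gcongr; exact le_abs_self d
    _ = √(a / v * d ^ 2) := by rw [Real.sqrt_mul' _ (sq_nonneg d), Real.sqrt_sq_eq_abs]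
    _ = √(a * d ^ 2 / v) := by rw [div_mul_eq_mul_div]
    _ ≤ 1 := Real.sqrt_le_one.mpr (div_le_one_of_le₀ h hv)

end SqrtDiv

section MeanVariance

variable {n : ℕ} (z : Fin n → ℝ)

theorem vecVar_nonneg : 0 ≤ vecVar z := by
  unfold vecVar
  positivity

theorem sum_sub_vecMean : ∑ i, (z i - vecMean z) = 0 := by
  rcases eq_or_ne n 0 with rfl | hn
  · exact Fin.sum_univ_zero _
  · simp [vecMean, mul_div_cancel₀, hn]

theorem sum_sub_vecMean_sq : ∑ i, (z i - vecMean z) ^ 2 = n * vecVar z := by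
  rcases eq_or_ne n 0 with rfl | hn
  · simp
  · rw [vecVar, mul_div_cancel₀ _ (Nat.cast_ne_zero.mpr hn)]

theorem sum_mul_sub_vecMean_eq {p : Fin n → ℝ} (hp : ∑ i, p i = 1) :
    ∑ i, p i * z i - vecMean z = (∑ i, (n * p i - 1) * (z i - vecMean z)) / n := by
  have hn : (n : ℝ) ≠ 0 := by
    intro h
    obtain rfl : n = 0 := Nat.cast_eq_zero.mp h
    simp at hp
  have expand : ∑ i, (n * p i - 1) * (z i - vecMean z) =
      n * ∑ i, p i * z i - n * vecMean z * ∑ i, p i - ∑ i, (z i - vecMean z) := by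
    simp only [Finset.mul_sum, ← Finset.sum_sub_distrib]
    exact Finset.sum_congr rfl fun i _ => by ring
  rw [expand, hp, sum_sub_vecMean, sub_zero, mul_one, ← mul_sub, mul_div_cancel_left₀ _ hn]

end MeanVariance

theorem abs_sum_mul_sub_vecMean_le_sqrt {n : ℕ} {ρ : ℝ} {p : Fin n → ℝ}
    (hp : p ∈ chiSqBall n ρ) (z : Fin n → ℝ) :
    |∑ i, p i * z i - vecMean z| ≤ √(2 * ρ * vecVar z / n) := by
  obtain ⟨-, hsum, hdiv⟩ := hp
  have hdev : ∑ i, (n * p i - 1) ^ 2 ≤ 2 * ρ := by linarith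
  have hv := vecVar_nonneg z
  have cauchy_schwarz :
      (∑ i, (n * p i - 1) * (z i - vecMean z)) ^ 2 ≤ 2 * ρ * (n * vecVar z) := by
    calc (∑ i, (n * p i - 1) * (z i - vecMean z)) ^ 2
        ≤ (∑ i, (n * p i - 1) ^ 2) * ∑ i, (z i - vecMean z) ^ 2 :=
          Finset.sum_mul_sq_le_sq_mul_sq _ _ _
      _ = (∑ i, (n * p i - 1) ^ 2) * (n * vecVar z) := by rw [sum_sub_vecMean_sq]
      _ ≤ 2 * ρ * (n * vecVar z) := by gcongr
  apply Real.abs_le_sqrt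
  calc (∑ i, p i * z i - vecMean z) ^ 2
      = (∑ i, (n * p i - 1) * (z i - vecMean z)) ^ 2 / n ^ 2 := by
        rw [sum_mul_sub_vecMean_eq z hsum, div_pow]
    _ ≤ 2 * ρ * (n * vecVar z) / n ^ 2 := by gcongr
    _ = 2 * ρ * vecVar z / n := by field_simp

/-- The uniform weights `1 / n` tilted linearly against `z` with slope `c`, the candidates for
the minimiser of `∑ i, p i * z i` over the χ² ball. The slope is not restricted, so the weights may
be negative. -/
noncomputable def linearTilt {n : ℕ} (c : ℝ) (z : Fin n → ℝ) (i : Fin n) : ℝ :=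
  (1 - c * (z i - vecMean z)) / n

section LinearTilt

variable {n : ℕ}

theorem sum_linearTilt (hn : n ≠ 0) (c : ℝ) (z : Fin n → ℝ) : ∑ i, linearTilt c z i = 1 := by
  unfold linearTilt
  rw [← Finset.sum_div, Finset.sum_sub_distrib, ← Finset.mul_sum, sum_sub_vecMean]
  simp [hn]

theorem natCast_mul_linearTilt_sub_one (hn : n ≠ 0) (c : ℝ) (z : Fin n → ℝ) (i : Fin n) :
    n * linearTilt c z i - 1 = -c * (z i - vecMean z) := by
  rw [linearTilt, mul_div_cancel₀ _ (Nat.cast_ne_zero.mpr hn)]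
  ring

theorem linearTilt_mem_chiSqBall (hn : n ≠ 0) {ρ c : ℝ} {z : Fin n → ℝ}
    (hc : ∀ i, c * (z i - vecMean z) ≤ 1) (hρ : c ^ 2 * (n * vecVar z) ≤ 2 * ρ) :
    linearTilt c z ∈ chiSqBall n ρ := by
  refine ⟨fun i => div_nonneg (sub_nonneg.mpr (hc i)) n.cast_nonneg, sum_linearTilt hn c z, ?_⟩
  simp only [natCast_mul_linearTilt_sub_one hn, mul_pow, neg_sq, ← Finset.mul_sum,
    sum_sub_vecMean_sq]
  linarith

theorem sum_linearTilt_mul (hn : n ≠ 0) (c : ℝ) (z : Fin n → ℝ) :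
    ∑ i, linearTilt c z i * z i = vecMean z - c * vecVar z := by
  have hn' : (n : ℝ) ≠ 0 := Nat.cast_ne_zero.mpr hn
  have gain : ∑ i, linearTilt c z i * z i - vecMean z = -c * vecVar z := by
    rw [sum_mul_sub_vecMean_eq z (sum_linearTilt hn c z)]
    simp only [natCast_mul_linearTilt_sub_one hn, mul_assoc, ← sq, ← Finset.mul_sum,
      sum_sub_vecMean_sq]
    field_simp
  linarith

end LinearTilt

theorem isLeast_sum_mul_image_chiSqBall {n : ℕ} (hn : n ≠ 0) {ρ : ℝ} (hρ : 0 ≤ ρ)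
    {z : Fin n → ℝ} {M : ℝ} (hM : ∀ i, z i ≤ M)
    (hvar : 2 * ρ / n * (M - vecMean z) ^ 2 ≤ vecVar z) :
    IsLeast ((fun p => ∑ i, p i * z i) '' chiSqBall n ρ)
      (vecMean z - √(2 * ρ * vecVar z / n)) := by
  have hv := vecVar_nonneg z
  -- This slope puts the tilted weights on the boundary of the ball. For `vecVar z = 0` the division
  -- by zero makes it `0`, which is again right: `z` is constant and uniform weights are optimal.
  let c := √(2 * ρ / n / vecVar z)
  have hc : ∀ i, c * (z i - vecMean z) ≤ 1 := fun i =>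
    calc c * (z i - vecMean z) ≤ c * (M - vecMean z) := by gcongr; exact hM i
      _ ≤ 1 := sqrt_div_mul_le_one hv hvar
  have hradius : c ^ 2 * (n * vecVar z) ≤ 2 * ρ := by
    rw [Real.sq_sqrt (by positivity), div_div]
    exact mul_le_of_le_div₀ (by positivity) (by positivity) le_rfl
  have hvalue : c * vecVar z = √(2 * ρ * vecVar z / n) := by
    rw [sqrt_div_mul_self_eq_sqrt_mul hv, div_mul_eq_mul_div]
  refine ⟨⟨linearTilt c z, linearTilt_mem_chiSqBall hn hc hradius, ?_⟩, ?_⟩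
  · rw [← hvalue]
    exact sum_linearTilt_mul hn c z
  · rintro _ ⟨p, hp, rfl⟩
    exact sub_le_of_abs_sub_le_left (abs_sum_mul_sub_vecMean_le_sqrt hp z)

theorem stmt1 (n : ℕ) (hn : 1 ≤ n) (ρ : ℝ) (hρ : 0 ≤ ρ) (z : Fin n → ℝ)
    (hvar : (2 * ρ / n) * ((Finset.univ.sup' ⟨⟨0, hn⟩, Finset.mem_univ _⟩ z) - vecMean z)^2
      ≤ vecVar z) :
    droOPT n ρ z = vecMean z - Real.sqrt (2 * ρ * vecVar z / n) := by
  have hM : ∀ i, z i ≤ Finset.univ.sup' ⟨⟨0, hn⟩, Finset.mem_univ _⟩ z :=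
    fun i => Finset.le_sup' z (Finset.mem_univ i)
  exact (isLeast_sum_mul_image_chiSqBall (Nat.one_le_iff_ne_zero.mp hn) hρ hM hvar).csInf_eq
end

section
/- Let n ≥ 1 be an integer, ρ ≥ 0, z ∈ ℝⁿ, and suppose every minimizer p of p ↦ ∑_{i=1}^n p_i z_i over P_{ρ,n} satisfies (1/2)∑_{i=1}^n (n p_i − 1)² = ρ. Let m* be the minimum of |{i : p_i > 0}| over all minimizers p. Then there is exactly one minimizer p whose support {i : p_i > 0} has cardinality m*; i.e., there is a unique optimal solution with minimum cardinality among all optimal solutions. -/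
/-
The minimizers of a quasiconvex objective form a convex set, and a strictly convex function is
constant on no convex set with more than one point. The hypothesis says that the `χ²`-divergence,
which is strictly convex, equals `ρ` at every minimizer; hence there is only one minimizer, and it
trivially has the least support.
-/

open Set

theorem convex_setOf_isMinOn {𝕜 E β : Type*} [Semiring 𝕜] [PartialOrder 𝕜] [AddCommMonoid E]
    [SMul 𝕜 E] [Preorder β] {s : Set E} {f : E → β} (hf : QuasiconvexOn 𝕜 s f) :
    Convex 𝕜 {x | x ∈ s ∧ IsMinOn f s x} := by
  rintro x ⟨hx, hxmin⟩ y ⟨hy, hymin⟩ a b ha hb hab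
  obtain ⟨hmem, hle⟩ := hf (f x) ⟨hx, le_rfl⟩ ⟨hy, hymin hx⟩ ha hb hab
  exact ⟨hmem, fun z hz => hle.trans (hxmin hz)⟩

section StrictConvex

variable {𝕜 E γ : Type*} [Field 𝕜] [LinearOrder 𝕜] [IsStrictOrderedRing 𝕜] [AddCommGroup E]
  [Module 𝕜 E] [AddCommGroup γ] [LinearOrder γ] [IsOrderedAddMonoid γ] [Module 𝕜 γ]
  [PosSMulStrictMono 𝕜 γ] {s : Set E} {g : E → γ} {c : γ}

theorem subsingleton_of_strictConvexOn_of_forall_eq (hg : StrictConvexOn 𝕜 s g)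
    (hc : ∀ x ∈ s, g x = c) : s.Subsingleton := by
  have hmin : ∀ x ∈ s, IsMinOn g s x := fun x hx y hy => ((hc x hx).trans (hc y hy).symm).le
  exact fun x hx y hy => hg.eq_of_isMinOn (hmin x hx) (hmin y hy) hx hy

theorem existsUnique_isMinOn_of_forall_eq {β : Type*} [LinearOrder β] [TopologicalSpace E]
    {f : E → β} (hs : IsCompact s) (hne : s.Nonempty) (hfc : LowerSemicontinuousOn f s)
    (hf : QuasiconvexOn 𝕜 s f) (hg : StrictConvexOn 𝕜 s g)
    (hc : ∀ x ∈ s, IsMinOn f s x → g x = c) : ∃! x, x ∈ s ∧ IsMinOn f s x := by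
  obtain ⟨x, hx⟩ := hfc.exists_isMinOn hne hs
  have hsub : {y | y ∈ s ∧ IsMinOn f s y}.Subsingleton :=
    subsingleton_of_strictConvexOn_of_forall_eq
      (hg.subset (fun _ hy => hy.1) (convex_setOf_isMinOn hf)) fun y hy => hc y hy.1 hy.2
  exact ⟨x, hx, fun y hy => hsub hy hx⟩

end StrictConvex

theorem existsUnique_and_forall_le {α β : Type*} [Preorder β] {P : α → Prop} (h : ∃! x, P x)
    (f : α → β) : ∃! x, P x ∧ ∀ y, P y → f x ≤ f y := by
  obtain ⟨x, hx, huniq⟩ := h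
  exact ⟨x, ⟨hx, fun y hy => (congrArg f (huniq y hy)).ge⟩, fun y hy => huniq y hy.1⟩

theorem strictConvexOn_pi_sum {𝕜 ι β : Type*} {E : ι → Type*} [Semiring 𝕜] [PartialOrder 𝕜]
    [Fintype ι] [∀ i, AddCommMonoid (E i)] [∀ i, Module 𝕜 (E i)] [AddCommMonoid β]
    [PartialOrder β] [IsOrderedCancelAddMonoid β] [Module 𝕜 β] {s : ∀ i, Set (E i)}
    {f : ∀ i, E i → β} (hf : ∀ i, StrictConvexOn 𝕜 (s i) (f i)) :
    StrictConvexOn 𝕜 (univ.pi s) fun x => ∑ i, f i (x i) := by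
  refine ⟨convex_pi fun i _ => (hf i).1, fun x hx y hy hxy a b ha hb hab => ?_⟩
  obtain ⟨j, hj⟩ := Function.ne_iff.mp hxy
  rw [Finset.smul_sum, Finset.smul_sum, ← Finset.sum_add_distrib]
  exact Finset.sum_lt_sum
    (fun i _ => (hf i).convexOn.2 (hx i trivial) (hy i trivial) ha.le hb.le hab)
    ⟨j, Finset.mem_univ j, (hf j).2 (hx j trivial) (hy j trivial) hj ha hb hab⟩

section LinearOrderedCommRing

variable {𝕜 : Type*} [CommRing 𝕜] [LinearOrder 𝕜] [IsStrictOrderedRing 𝕜]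

theorem quasiconvexOn_sum_mul {ι : Type*} [Fintype ι] {s : Set (ι → 𝕜)} (hs : Convex 𝕜 s)
    (z : ι → 𝕜) : QuasiconvexOn 𝕜 s fun p => ∑ i, p i * z i :=
  ((Fintype.linearCombination 𝕜 z).convexOn hs).quasiconvexOn

theorem strictConvexOn_mul_sq {r c : 𝕜} (hr : 0 < r) (hc : c ≠ 0) (d : 𝕜) :
    StrictConvexOn 𝕜 univ fun t : 𝕜 => r * (c * t - d) ^ 2 := by
  refine ⟨convex_univ, fun x _ y _ hxy a b ha hb hab => ?_⟩
  have hgap : a • (r * (c * x - d) ^ 2) + b • (r * (c * y - d) ^ 2)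
      - r * (c * (a • x + b • y) - d) ^ 2 = a * b * r * c ^ 2 * (x - y) ^ 2 := by
    obtain rfl : b = 1 - a := eq_sub_of_add_eq' hab
    simp only [smul_eq_mul]
    ring
  have hpos : 0 < a * b * r * c ^ 2 * (x - y) ^ 2 :=
    mul_pos (by positivity) (sq_pos_of_ne_zero (sub_ne_zero.mpr hxy))
  exact sub_pos.mp (hgap ▸ hpos)

end LinearOrderedCommRing

/-- The `χ²`-divergence `(1/2) ∑ (n pᵢ - 1)²` of `p` from the uniform distribution on `Fin n`. It
is defined for every vector `p`, so that convexity and continuity can be stated on the whole space;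
its sublevel sets in the standard simplex are the balls `chiSqBall n ρ`. -/
noncomputable def chiSqDiv {n : ℕ} (p : Fin n → ℝ) : ℝ :=
  (1 / 2) * ∑ i, ((n : ℝ) * p i - 1) ^ 2

section ChiSq

variable {n : ℕ} {ρ : ℝ}

theorem continuous_chiSqDiv : Continuous (chiSqDiv : (Fin n → ℝ) → ℝ) := by
  unfold chiSqDiv
  fun_prop

theorem strictConvexOn_chiSqDiv (hn : n ≠ 0) :
    StrictConvexOn ℝ univ (chiSqDiv : (Fin n → ℝ) → ℝ) := by
  have hn' : (n : ℝ) ≠ 0 := Nat.cast_ne_zero.mpr hn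
  have hsum : StrictConvexOn ℝ (univ.pi fun _ => univ)
      fun p : Fin n → ℝ => ∑ i, (1 / 2 : ℝ) * ((n : ℝ) * p i - 1) ^ 2 :=
    strictConvexOn_pi_sum fun _ => strictConvexOn_mul_sq one_half_pos hn' 1
  simp only [pi_univ, ← Finset.mul_sum] at hsum
  exact hsum

theorem chiSqBall_eq_stdSimplex_inter :
    chiSqBall n ρ = stdSimplex ℝ (Fin n) ∩ {p | chiSqDiv p ≤ ρ} := by
  ext p
  exact and_assoc.symm

theorem isCompact_chiSqBall : IsCompact (chiSqBall n ρ) := by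
  rw [chiSqBall_eq_stdSimplex_inter]
  exact (isCompact_stdSimplex ℝ (Fin n)).inter_right
    (isClosed_le continuous_chiSqDiv continuous_const)

theorem convex_chiSqBall (hn : n ≠ 0) : Convex ℝ (chiSqBall n ρ) := by
  rw [chiSqBall_eq_stdSimplex_inter]
  exact ((strictConvexOn_chiSqDiv hn).convexOn.subset (subset_univ _)
    (convex_stdSimplex ℝ (Fin n))).convex_le ρ

theorem chiSqBall_nonempty (hn : n ≠ 0) (hρ : 0 ≤ ρ) : (chiSqBall n ρ).Nonempty := by
  have hn' : (n : ℝ) ≠ 0 := Nat.cast_ne_zero.mpr hn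
  refine ⟨fun _ => (n : ℝ)⁻¹, fun _ => by positivity, ?_, ?_⟩ <;> simp [hn', hρ]

theorem stmt12_general (hn : n ≠ 0) (hρ : 0 ≤ ρ) {β : Type*} [LinearOrder β]
    {f : (Fin n → ℝ) → β} (hfc : LowerSemicontinuousOn f (chiSqBall n ρ))
    (hf : QuasiconvexOn ℝ (chiSqBall n ρ) f) {c : ℝ}
    (hc : ∀ p ∈ chiSqBall n ρ, IsMinOn f (chiSqBall n ρ) p → chiSqDiv p = c) :
    ∃! p, p ∈ chiSqBall n ρ ∧ IsMinOn f (chiSqBall n ρ) p :=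
  existsUnique_isMinOn_of_forall_eq isCompact_chiSqBall (chiSqBall_nonempty hn hρ) hfc hf
    ((strictConvexOn_chiSqDiv hn).subset (subset_univ _) (convex_chiSqBall hn)) hc

end ChiSq

open Classical in
theorem stmt12 (n : ℕ) (hn : 1 ≤ n) (ρ : ℝ) (hρ : 0 ≤ ρ) (z : Fin n → ℝ)
    (htight : ∀ p ∈ chiSqBall n ρ,
      (∀ q ∈ chiSqBall n ρ, ∑ i, p i * z i ≤ ∑ i, q i * z i) →
      (1/2) * ∑ i, ((n : ℝ) * p i - 1)^2 = ρ) :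
    ∃! p : Fin n → ℝ,
      (p ∈ chiSqBall n ρ ∧ ∀ q ∈ chiSqBall n ρ, ∑ i, p i * z i ≤ ∑ i, q i * z i) ∧
      ∀ q : Fin n → ℝ,
        (q ∈ chiSqBall n ρ ∧ ∀ r ∈ chiSqBall n ρ, ∑ i, q i * z i ≤ ∑ i, r i * z i) →
        (Finset.univ.filter (fun i => 0 < p i)).card ≤
          (Finset.univ.filter (fun i => 0 < q i)).card := by
  have hn0 : n ≠ 0 := Nat.one_le_iff_ne_zero.mp hn
  refine existsUnique_and_forall_le ?_ fun p : Fin n → ℝ =>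
    (Finset.univ.filter fun i => 0 < p i).card
  exact stmt12_general hn0 hρ (Continuous.continuousOn (by fun_prop)).lowerSemicontinuousOn
    (quasiconvexOn_sum_mul (convex_chiSqBall hn0) z) htight
end
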